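/- arXiv:1410.7081 — 3 statements merged into one kernel-verified Lean document; each statement's English description precedes it below -/
import Mathlib

section
/- The derivative of the complete elliptic integral of the first kind satisfies dK/dk = (E(k) - (1-k^2)K(k)) / (k(1-k^2)) for 0 < k < 1. -/
open scoped Real
open MeasureTheory

noncomputable def EllK (k : ℝ) : ℝ :=
  ∫ x in (0:ℝ)..(1:ℝ), 1 / Real.sqrt ((1 - x^2) * (1 - k^2 * x^2))

noncomputable def EllE (k : ℝ) : ℝ :=
  ∫ x in (0:ℝ)..(1:ℝ), Real.sqrt ((1 - k^2 * x^2) / (1 - x^2))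

noncomputable def EllK' (k : ℝ) : ℝ := EllK (Real.sqrt (1 - k^2))

/-!
Write `I s k = ∫₀¹ (1 - x²)^(-1/2) (1 - k²x²)^s dx`, so that `K = I (-1/2)` and `E = I (1/2)`.
Differentiating under the integral sign and using `k²x² = 1 - (1 - k²x²)` gives
`k (d/dk) (I s) = 2s (I s - I (s - 1))`. Integrating the derivative of
`k² x √(1 - x²) (1 - k²x²)^s`, which vanishes at both endpoints, gives a three-term recurrence in
`s` whose middle coefficient `(2s + 1) (2 - k²)` disappears at `s = -1/2`, leaving
`(1 - k²) I (-3/2) = I (1/2) = E`.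
-/

open Set Topology

theorem hasDerivAt_intervalIntegral_smul_of_continuousOn {𝕜 E : Type*} [RCLike 𝕜]
    [NormedAddCommGroup E] [NormedSpace ℝ E] [NormedSpace 𝕜 E] {μ : Measure ℝ} {a b : ℝ}
    {w : ℝ → 𝕜} {F F' : 𝕜 → ℝ → E} {s : Set 𝕜} {t₀ : 𝕜} (hs : s ∈ 𝓝 t₀)
    (hw : IntervalIntegrable w μ a b) (hF : ∀ t ∈ s, ContinuousOn (F t) (uIcc a b))
    (hF' : ContinuousOn (Function.uncurry F') (s ×ˢ uIcc a b))
    (hderiv : ∀ t ∈ s, ∀ x ∈ uIcc a b, HasDerivAt (F · x) (F' t x) t) :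
    HasDerivAt (fun t ↦ ∫ x in a..b, w x • F t x ∂μ) (∫ x in a..b, w x • F' t₀ x ∂μ) t₀ := by
  obtain ⟨T, hT, hTs, hTc⟩ := local_compact_nhds hs
  obtain ⟨C, hC⟩ := (hTc.prod (isCompact_uIcc (a := a) (b := b))).exists_bound_of_continuousOn
    (hF'.mono (prod_mono_left hTs))
  have ht₀ : t₀ ∈ s := mem_of_mem_nhds hs
  have hbound (x : ℝ) (hx : x ∈ uIoc a b) (t : 𝕜) (ht : t ∈ T) : ‖w x • F' t x‖ ≤ ‖w x‖ * C := by
    rw [norm_smul]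
    gcongr
    exact hC (t, x) ⟨ht, uIoc_subset_uIcc hx⟩
  refine (intervalIntegral.hasDerivAt_integral_of_dominated_loc_of_deriv_le hT ?_
    (hw.smul_continuousOn (hF t₀ ht₀))
    (hw.smul_continuousOn (hF'.uncurry_left t₀ ht₀)).aestronglyMeasurable_restrict_uIoc
    (.of_forall hbound) (hw.norm.mul_const C) (.of_forall fun x hx t ht ↦ ?_)).2
  · filter_upwards [hs] with t ht
    exact (hw.smul_continuousOn (hF t ht)).aestronglyMeasurable_restrict_uIoc
  · exact (hderiv t (hTs ht) x (uIoc_subset_uIcc hx)).const_smul (w x)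

theorem intervalIntegrable_inv_sqrt_one_sub_sq :
    IntervalIntegrable (fun x : ℝ ↦ (√(1 - x ^ 2))⁻¹) volume 0 1 := by
  simp only [← Real.sqrt_inv]
  exact Polynomial.Chebyshev.intervalIntegrable_sqrt_one_sub_sq_inv.mono_set
    (uIcc_subset_uIcc_right (by simp))

theorem one_sub_sq_mul_sq_pos {k x : ℝ} (hk : |k| < 1) (hx : |x| ≤ 1) :
    0 < 1 - k ^ 2 * x ^ 2 := by
  rw [sub_pos, ← mul_pow, sq_lt_one_iff_abs_lt_one, abs_mul]
  exact mul_lt_one_of_nonneg_of_lt_one_left (abs_nonneg k) hk hx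

theorem one_sub_sq_mul_sq_pos_of_mem_uIcc {k x : ℝ} (hk : |k| < 1) (hx : x ∈ uIcc (0 : ℝ) 1) :
    0 < 1 - k ^ 2 * x ^ 2 := by
  rw [uIcc_of_le zero_le_one] at hx
  exact one_sub_sq_mul_sq_pos hk (abs_le.2 ⟨by linarith [hx.1], hx.2⟩)

/-- The complete elliptic integral `∫₀¹ (1 - x²)^(-1/2) (1 - k²x²)^s dx` with modulus `k` and real
exponent `s`, of which `K` and `E` are the cases `s = -1/2` and `s = 1/2`. -/
noncomputable def ellipticIntegral (s k : ℝ) : ℝ :=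
  ∫ x in (0 : ℝ)..1, (√(1 - x ^ 2))⁻¹ * (1 - k ^ 2 * x ^ 2) ^ s

theorem EllE_eq_ellipticIntegral (k : ℝ) : EllE k = ellipticIntegral (1 / 2) k := by
  refine intervalIntegral.integral_congr fun x hx ↦ ?_
  rw [uIcc_of_le zero_le_one] at hx
  have hx2 : 0 ≤ 1 - x ^ 2 := by nlinarith [hx.1, hx.2]
  rw [Real.sqrt_div' _ hx2, Real.sqrt_eq_rpow (1 - k ^ 2 * x ^ 2), div_eq_inv_mul]

theorem EllK_eq_ellipticIntegral {k : ℝ} (hk : |k| < 1) :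
    EllK k = ellipticIntegral (-1 / 2) k := by
  refine intervalIntegral.integral_congr fun x hx ↦ ?_
  have hD := one_sub_sq_mul_sq_pos_of_mem_uIcc hk hx
  rw [Real.sqrt_mul' _ hD.le, Real.sqrt_eq_rpow (1 - k ^ 2 * x ^ 2), one_div, mul_inv, neg_div,
    Real.rpow_neg hD.le]

theorem continuousOn_uncurry_one_sub_sq_mul_sq_rpow (s : ℝ) :
    ContinuousOn (Function.uncurry fun k x : ℝ ↦ (1 - k ^ 2 * x ^ 2) ^ s)
      ({k | |k| < 1} ×ˢ uIcc 0 1) :=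
  ContinuousOn.rpow_const (by fun_prop) fun _ hp ↦
    .inl (one_sub_sq_mul_sq_pos_of_mem_uIcc hp.1 hp.2).ne'

theorem continuousOn_one_sub_sq_mul_sq_rpow {k : ℝ} (hk : |k| < 1) (s : ℝ) :
    ContinuousOn (fun x : ℝ ↦ (1 - k ^ 2 * x ^ 2) ^ s) (uIcc 0 1) :=
  (continuousOn_uncurry_one_sub_sq_mul_sq_rpow s).uncurry_left k hk

theorem intervalIntegrable_ellipticIntegrand {k : ℝ} (hk : |k| < 1) (s : ℝ) :
    IntervalIntegrable (fun x : ℝ ↦ (√(1 - x ^ 2))⁻¹ * (1 - k ^ 2 * x ^ 2) ^ s) volume 0 1 :=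
  intervalIntegrable_inv_sqrt_one_sub_sq.mul_continuousOn
    (continuousOn_one_sub_sq_mul_sq_rpow hk s)

theorem hasDerivAt_one_sub_sq_mul_const_rpow {t c : ℝ} (s : ℝ) (h : 1 - t ^ 2 * c ≠ 0) :
    HasDerivAt (fun t : ℝ ↦ (1 - t ^ 2 * c) ^ s)
      (-(2 * t * c) * s * (1 - t ^ 2 * c) ^ (s - 1)) t := by
  have hbase : HasDerivAt (fun t : ℝ ↦ 1 - t ^ 2 * c) (-(2 * t * c)) t := by
    simpa using ((hasDerivAt_pow 2 t).mul_const c).const_sub 1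
  exact hbase.rpow_const (.inl h)

theorem hasDerivAt_ellipticIntegral_integral {k : ℝ} (hk : |k| < 1) (s : ℝ) :
    HasDerivAt (ellipticIntegral s) (∫ x in (0 : ℝ)..1,
      (√(1 - x ^ 2))⁻¹ * (-(2 * k * x ^ 2) * s * (1 - k ^ 2 * x ^ 2) ^ (s - 1))) k :=
  hasDerivAt_intervalIntegral_smul_of_continuousOn
    (F' := fun k x ↦ -(2 * k * x ^ 2) * s * (1 - k ^ 2 * x ^ 2) ^ (s - 1))
    ((isOpen_lt continuous_abs continuous_const).mem_nhds hk)
    intervalIntegrable_inv_sqrt_one_sub_sq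
    (fun _ ht ↦ continuousOn_one_sub_sq_mul_sq_rpow ht s)
    (ContinuousOn.mul (by fun_prop) (continuousOn_uncurry_one_sub_sq_mul_sq_rpow (s - 1)))
    fun _ ht _ hx ↦ hasDerivAt_one_sub_sq_mul_const_rpow s
      (one_sub_sq_mul_sq_pos_of_mem_uIcc ht hx).ne'

theorem hasDerivAt_ellipticIntegral {k : ℝ} (hk0 : k ≠ 0) (hk : |k| < 1) (s : ℝ) :
    HasDerivAt (ellipticIntegral s)
      (2 * s / k * (ellipticIntegral s k - ellipticIntegral (s - 1) k)) k := by
  convert hasDerivAt_ellipticIntegral_integral hk s using 1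
  rw [ellipticIntegral, ellipticIntegral, ← intervalIntegral.integral_sub
    (intervalIntegrable_ellipticIntegrand hk s) (intervalIntegrable_ellipticIntegrand hk (s - 1)),
    ← intervalIntegral.integral_const_mul]
  refine intervalIntegral.integral_congr fun x hx ↦ ?_
  have hD := (one_sub_sq_mul_sq_pos_of_mem_uIcc hk hx).ne'
  simp only [Real.rpow_sub_one hD]
  field_simp
  ring

theorem hasDerivAt_mul_sqrt_mul_rpow {k x : ℝ} (s : ℝ) (hx : 0 < 1 - x ^ 2)
    (hkx : 1 - k ^ 2 * x ^ 2 ≠ 0) :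
    HasDerivAt (fun x : ℝ ↦ k ^ 2 * (x * √(1 - x ^ 2) * (1 - k ^ 2 * x ^ 2) ^ s))
      (2 * (s + 1) * ((√(1 - x ^ 2))⁻¹ * (1 - k ^ 2 * x ^ 2) ^ (s + 1))
        - (2 * s + 1) * (2 - k ^ 2) * ((√(1 - x ^ 2))⁻¹ * (1 - k ^ 2 * x ^ 2) ^ s)
        + 2 * s * (1 - k ^ 2) * ((√(1 - x ^ 2))⁻¹ * (1 - k ^ 2 * x ^ 2) ^ (s - 1))) x := by
  have hsqrt : HasDerivAt (fun x : ℝ ↦ √(1 - x ^ 2)) (-(2 * x) / (2 * √(1 - x ^ 2))) x := by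
    simpa using ((hasDerivAt_pow 2 x).const_sub 1).sqrt hx.ne'
  have hrpow : HasDerivAt (fun x : ℝ ↦ (1 - k ^ 2 * x ^ 2) ^ s)
      (-(2 * x * k ^ 2) * s * (1 - k ^ 2 * x ^ 2) ^ (s - 1)) x := by
    simp only [mul_comm (k ^ 2)] at hkx ⊢
    exact hasDerivAt_one_sub_sq_mul_const_rpow s hkx
  have hsqrt_sq : √(1 - x ^ 2) ^ 2 = 1 - x ^ 2 := Real.sq_sqrt hx.le
  have hsqrt_ne : √(1 - x ^ 2) ≠ 0 := (Real.sqrt_pos.2 hx).ne'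
  refine ((((hasDerivAt_id' x).fun_mul hsqrt).fun_mul hrpow).const_mul (k ^ 2)).congr_deriv ?_
  rw [Real.rpow_add_one hkx, Real.rpow_sub_one hkx]
  field_simp
  rw [hsqrt_sq]
  ring

theorem ellipticIntegral_recurrence {k : ℝ} (hk : |k| < 1) (s : ℝ) :
    2 * (s + 1) * ellipticIntegral (s + 1) k - (2 * s + 1) * (2 - k ^ 2) * ellipticIntegral s k
      + 2 * s * (1 - k ^ 2) * ellipticIntegral (s - 1) k = 0 := by
  have hI (r c : ℝ) := (intervalIntegrable_ellipticIntegrand hk r).const_mul c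
  have hcont : ContinuousOn (fun x : ℝ ↦ k ^ 2 * (x * √(1 - x ^ 2) * (1 - k ^ 2 * x ^ 2) ^ s))
      (Icc 0 1) := by
    have h := continuousOn_one_sub_sq_mul_sq_rpow hk s
    rw [uIcc_of_le zero_le_one] at h
    fun_prop
  have hFTC := intervalIntegral.integral_eq_sub_of_hasDerivAt_of_le zero_le_one hcont
    (fun x hx ↦ hasDerivAt_mul_sqrt_mul_rpow s (by nlinarith [hx.1, hx.2])
      (one_sub_sq_mul_sq_pos_of_mem_uIcc hk (Icc_subset_uIcc (Ioo_subset_Icc_self hx))).ne')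
    (((hI _ _).sub (hI _ _)).add (hI _ _))
  rw [intervalIntegral.integral_add ((hI _ _).sub (hI _ _)) (hI _ _),
    intervalIntegral.integral_sub (hI _ _) (hI _ _)] at hFTC
  simpa [ellipticIntegral] using hFTC

theorem one_sub_sq_mul_ellipticIntegral_neg_three_halves {k : ℝ} (hk : |k| < 1) :
    (1 - k ^ 2) * ellipticIntegral (-3 / 2) k = ellipticIntegral (1 / 2) k := by
  have h := ellipticIntegral_recurrence hk (-1 / 2)
  rw [show (-1 / 2 + 1 : ℝ) = 1 / 2 by norm_num, show (-1 / 2 - 1 : ℝ) = -3 / 2 by norm_num] at h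
  linear_combination -h

theorem stmt_0_general {k : ℝ} (hk0 : k ≠ 0) (hk : |k| < 1) :
    HasDerivAt EllK ((EllE k - (1 - k ^ 2) * EllK k) / (k * (1 - k ^ 2))) k := by
  have hEllK : EllK =ᶠ[𝓝 k] ellipticIntegral (-1 / 2) := by
    filter_upwards [(isOpen_lt continuous_abs continuous_const).mem_nhds hk] with t ht
    exact EllK_eq_ellipticIntegral ht
  have hk2 : 1 - k ^ 2 ≠ 0 := by simpa using (one_sub_sq_mul_sq_pos hk abs_one.le).ne'
  have hderiv := hasDerivAt_ellipticIntegral hk0 hk (-1 / 2)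
  rw [show (-1 / 2 - 1 : ℝ) = -3 / 2 by norm_num] at hderiv
  refine (hderiv.congr_of_eventuallyEq hEllK).congr_deriv ?_
  rw [EllE_eq_ellipticIntegral, EllK_eq_ellipticIntegral hk,
    ← one_sub_sq_mul_ellipticIntegral_neg_three_halves hk]
  field_simp
  ring

theorem stmt_0 (k : ℝ) (hk : 0 < k) (hk1 : k < 1) :
    HasDerivAt EllK ((EllE k - (1 - k^2) * EllK k) / (k * (1 - k^2))) k :=
  stmt_0_general hk.ne' (abs_lt.2 ⟨by linarith, hk1⟩)
end

section
/- For 0 < q < 1, the triple product θ₂(q)θ₃(q)θ₄(q) equals Σ_{n∈ℤ} 2n(-1)ⁿ q^{(n+1/2)²}. -/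
noncomputable def theta2 (q : ℝ) : ℝ := ∑' n : ℤ, q ^ (((n : ℝ) - 1/2)^2)

noncomputable def theta3 (q : ℝ) : ℝ := ∑' n : ℤ, q ^ ((n : ℝ)^2)

noncomputable def theta4 (q : ℝ) : ℝ := ∑' n : ℤ, (-1 : ℝ)^n * q ^ ((n : ℝ)^2)

/-!
Write `D(q)` for the right-hand side; it is `θ₁'(0)`. Sorting the pairs `(m, n)` of integers by the
parity of `m + n` and rotating the lattice by 45° turns a product of two theta series at `q` into
products of theta series at `q²`. This gives

* `θ₃(q) θ₄(q) = θ₄(q²)²`,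
* `θ₂(q)² = 2 θ₂(q²) θ₃(q²)`,
* `D(q) θ₂(q) = 2 D(q²) θ₄(q²)`.

Hence the defect `g = D / θ₂ - θ₃ θ₄` satisfies `g(q) = θ₄(q²) / θ₃(q²) * g(q²)`. As `|θ₄| ≤ θ₃`,
it follows that `|g(q)| ≤ |g(q²)| ≤ |g(q⁴)| ≤ ⋯`, while comparing leading terms shows that `g`
tends to `0` at `0`; so `g = 0`.
-/

open Filter Topology Finset

/-! ### Sums over the square lattice and series in real powers -/

theorem bijective_sumElim_add_sub : Function.Bijective
    (Sum.elim (fun p : ℤ × ℤ ↦ (p.1 + p.2, p.1 - p.2))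
      (fun p : ℤ × ℤ ↦ (p.1 + p.2, p.1 - p.2 - 1))) := by
  constructor
  · rintro (⟨a, b⟩ | ⟨a, b⟩) (⟨c, d⟩ | ⟨c, d⟩) h <;>
      simp only [Sum.elim_inl, Sum.elim_inr, Prod.mk.injEq, Sum.inl.injEq, Sum.inr.injEq,
        reduceCtorEq] at h ⊢ <;> omega
  · rintro ⟨m, n⟩
    rcases Int.even_or_odd' (m + n) with ⟨k, hk | hk⟩
    · exact ⟨.inl (k, m - k), Prod.ext (by simp) (by simp; omega)⟩
    · exact ⟨.inr (k + 1, m - k - 1), Prod.ext (by simp) (by simp; omega)⟩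

theorem hasSum_of_hasSum_add_sub {M : Type*} [AddCommMonoid M] [TopologicalSpace M]
    [ContinuousAdd M] {f : ℤ × ℤ → M} {s t : M}
    (hs : HasSum (fun p : ℤ × ℤ ↦ f (p.1 + p.2, p.1 - p.2)) s)
    (ht : HasSum (fun p : ℤ × ℤ ↦ f (p.1 + p.2, p.1 - p.2 - 1)) t) : HasSum f (s + t) :=
  (Equiv.ofBijective _ bijective_sumElim_add_sub).hasSum_iff.1 (.sum hs ht)

theorem tendsto_tsum_mul_rpow_div_rpow {ι : Type*} {c e : ι → ℝ} {μ r : ℝ} {s : Finset ι}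
    (hs : ∀ i ∈ s, e i = μ) (hs' : ∀ i ∉ s, μ < e i) (hr : 0 < r)
    (hsum : Summable fun i ↦ c i * r ^ e i) :
    Tendsto (fun q : ℝ ↦ (∑' i, c i * q ^ e i) / q ^ μ) (𝓝[>] 0) (𝓝 (∑ i ∈ s, c i)) := by
  have he (i : ι) : 0 ≤ e i - μ := by
    by_cases hi : i ∈ s
    · exact (sub_eq_zero.2 (hs i hi)).ge
    · exact (sub_pos.2 (hs' i hi)).le
  have hlim : ∑' i, c i * (0 : ℝ) ^ (e i - μ) = ∑ i ∈ s, c i := by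
    rw [tsum_eq_sum fun i hi ↦ by rw [Real.zero_rpow (sub_pos.2 (hs' i hi)).ne', mul_zero]]
    exact sum_congr rfl fun i hi ↦ by rw [hs i hi, sub_self, Real.rpow_zero, mul_one]
  have hbound : Summable fun i ↦ ‖c i * r ^ (e i - μ)‖ := by
    refine ((hsum.div_const (r ^ μ)).congr fun i ↦ ?_).norm
    rw [Real.rpow_sub hr, mul_div_assoc]
  rw [← hlim]
  refine (tendsto_tsum_of_dominated_convergence
    (f := fun q i ↦ c i * q ^ (e i - μ)) hbound (fun i ↦ ?_) ?_).congr' ?_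
  · exact ((Real.continuousAt_rpow_const 0 _ (.inr (he i))).tendsto.const_mul _).mono_left
      nhdsWithin_le_nhds
  · filter_upwards [Ioo_mem_nhdsGT hr] with q hq i
    rw [norm_mul, norm_mul, Real.norm_of_nonneg (Real.rpow_nonneg hq.1.le _),
      Real.norm_of_nonneg (Real.rpow_nonneg hr.le _)]
    gcongr
    exacts [hq.1.le, he i, hq.2.le]
  · filter_upwards [self_mem_nhdsWithin] with q (hq : 0 < q)
    simp only [Real.rpow_sub hq, ← mul_div_assoc, tsum_div_const]

theorem eq_zero_of_norm_le_norm_sq {E : Type*} [NormedAddCommGroup E] {g : ℝ → E}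
    (hg : ∀ q, 0 < q → q < 1 → ‖g q‖ ≤ ‖g (q ^ 2)‖) (hlim : Tendsto g (𝓝[>] 0) (𝓝 0))
    {q : ℝ} (hq : 0 < q) (hq1 : q < 1) : g q = 0 := by
  have hle (j : ℕ) : ‖g q‖ ≤ ‖g (q ^ 2 ^ j)‖ := by
    induction j with
    | zero => simp
    | succ j ih =>
      rw [pow_succ, pow_mul]
      exact ih.trans (hg _ (pow_pos hq _) (pow_lt_one₀ hq.le hq1 (by positivity)))
  have hpow : Tendsto (fun j : ℕ ↦ q ^ 2 ^ j) atTop (𝓝[>] 0) :=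
    (tendsto_pow_atTop_nhdsWithin_zero_of_lt_one hq hq1).comp
      (tendsto_pow_atTop_atTop_of_one_lt one_lt_two)
  exact norm_le_zero_iff.1 <| ge_of_tendsto' (by simpa using (hlim.comp hpow).norm) hle

/-! ### Theta series with characteristics -/

/-- The general term of `thetaSeries`. -/
noncomputable def thetaTerm (k : ℕ) (ε a q : ℝ) (n : ℤ) : ℝ :=
  ((n : ℝ) + a) ^ k * ε ^ n * q ^ (((n : ℝ) + a) ^ 2)

/-- The theta series `∑ (n + a)ᵏ εⁿ q^((n + a)²)` over the integers, with shift `a`, multiplier `ε`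
and weight `k`. It gives a common form to `θ₂`, `θ₃`, `θ₄` and, for `k = 1`, to `θ₁'(0)`. -/
noncomputable def thetaSeries (k : ℕ) (ε a q : ℝ) : ℝ :=
  ∑' n : ℤ, thetaTerm k ε a q n

section thetaSeries

variable {ε δ q : ℝ}

theorem summable_pow_mul_zpow_mul_rpow_sq (k : ℕ) (hε : ε ≠ 0) (hq : 0 < q) (hq1 : q < 1) :
    Summable fun n : ℤ ↦ (n : ℝ) ^ k * ε ^ n * q ^ ((n : ℝ) ^ 2) := by
  have hT : 0 < -Real.log q / Real.pi :=
    div_pos (neg_pos.2 (Real.log_neg hq hq1)) Real.pi_pos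
  refine (summable_pow_mul_jacobiTheta₂_term_bound
    (|Real.log ε| / (2 * Real.pi)) hT k).of_norm_bounded fun n ↦ ?_
  have hexp : |ε| ^ n * q ^ ((n : ℝ) ^ 2) =
      Real.exp (Real.log ε * n + Real.log q * (n : ℝ) ^ 2) := by
    rw [Real.exp_add, ← Real.rpow_def_of_pos hq, ← Real.log_abs,
      ← Real.rpow_def_of_pos (abs_pos.2 hε), Real.rpow_intCast]
  have hle : Real.log ε * n ≤ |Real.log ε| * |(n : ℝ)| :=
    (le_abs_self _).trans_eq (abs_mul _ _)
  rw [mul_assoc, norm_mul, norm_mul, norm_pow, norm_zpow, Real.norm_eq_abs, Real.norm_eq_abs,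
    Real.norm_of_nonneg (Real.rpow_nonneg hq.le _), hexp, Int.cast_abs]
  gcongr
  field_simp
  linarith

theorem summable_thetaTerm (k : ℕ) (a : ℝ) (hε : ε ≠ 0) (hq : 0 < q) (hq1 : q < 1) :
    Summable (thetaTerm k ε a q) := by
  -- The cross term of `(n + a)²` is absorbed into the multiplier.
  have hrpow (n : ℤ) : ε ^ n * q ^ (((n : ℝ) + a) ^ 2) =
      (ε * q ^ (2 * a)) ^ n * q ^ ((n : ℝ) ^ 2) * q ^ (a ^ 2) := by
    rw [mul_zpow, ← Real.rpow_mul_intCast hq.le, mul_assoc, mul_assoc, ← Real.rpow_add hq,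
      ← Real.rpow_add hq]
    ring_nf
  have hterm (n : ℤ) : thetaTerm k ε a q n = ∑ i ∈ range (k + 1),
      (n : ℝ) ^ i * (ε * q ^ (2 * a)) ^ n * q ^ ((n : ℝ) ^ 2) *
        (q ^ (a ^ 2) * a ^ (k - i) * k.choose i) := by
    rw [thetaTerm, mul_assoc, hrpow, add_pow, sum_mul]
    exact sum_congr rfl fun i _ ↦ by ring
  refine (summable_sum fun i _ ↦ ?_).congr fun n ↦ (hterm n).symm
  exact (summable_pow_mul_zpow_mul_rpow_sq i (by positivity) hq hq1).mul_right _

theorem hasSum_thetaTerm_mul_thetaTerm (k l : ℕ) (a b : ℝ) (hε : ε ≠ 0) (hδ : δ ≠ 0) (hq : 0 < q)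
    (hq1 : q < 1) :
    HasSum (fun p : ℤ × ℤ ↦ thetaTerm k ε a q p.1 * thetaTerm l δ b q p.2)
      (thetaSeries k ε a q * thetaSeries l δ b q) :=
  have hk := summable_thetaTerm k a hε hq hq1
  have hl := summable_thetaTerm l b hδ hq hq1
  hk.hasSum.mul hl.hasSum (summable_mul_of_summable_norm hk.norm hl.norm)

theorem thetaTerm_add_one (k : ℕ) (a q : ℝ) (hε : ε ≠ 0) (n : ℤ) :
    thetaTerm k ε a q (n + 1) = ε * thetaTerm k ε (a + 1) q n := by
  simp only [thetaTerm, zpow_add_one₀ hε, Int.cast_add, Int.cast_one, add_right_comm _ (1 : ℝ),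
    ← add_assoc]
  ring

theorem thetaSeries_eq_mul_add_one (k : ℕ) (a q : ℝ) (hε : ε ≠ 0) :
    thetaSeries k ε a q = ε * thetaSeries k ε (a + 1) q := by
  rw [thetaSeries, ← (Equiv.addRight (1 : ℤ)).tsum_eq, thetaSeries, ← tsum_mul_left]
  exact tsum_congr (thetaTerm_add_one k a q hε)

theorem thetaSeries_neg (k : ℕ) (ε a q : ℝ) :
    thetaSeries k ε (-a) q = (-1) ^ k * thetaSeries k ε⁻¹ a q := by
  rw [thetaSeries, ← (Equiv.neg ℤ).tsum_eq, thetaSeries, ← tsum_mul_left]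
  refine tsum_congr fun n ↦ ?_
  simp only [thetaTerm, Equiv.neg_apply, Int.cast_neg, ← neg_add, neg_sq, zpow_neg, inv_zpow]
  rw [neg_pow]
  ring

theorem thetaSeries_zero_neg_one_half (q : ℝ) : thetaSeries 0 (-1) (1 / 2) q = 0 := by
  have hshift : thetaSeries 0 (-1) (-(1 / 2)) q = -1 * thetaSeries 0 (-1) (1 / 2) q := by
    rw [thetaSeries_eq_mul_add_one 0 _ q (neg_ne_zero.2 one_ne_zero)]
    norm_num
  have hneg : thetaSeries 0 (-1) (-(1 / 2)) q = thetaSeries 0 (-1) (1 / 2) q := by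
    rw [thetaSeries_neg, pow_zero, one_mul, inv_neg_one]
  linarith

theorem thetaTerm_add_mul_thetaTerm_sub (k : ℕ) (a b : ℝ) (hε : ε ≠ 0) (hδ : δ ≠ 0) (hq : 0 < q)
    (m n : ℤ) :
    thetaTerm k ε a q (m + n) * thetaTerm 0 δ b q (m - n) =
      ∑ i ∈ antidiagonal k, k.choose i.1 * (thetaTerm i.1 (ε * δ) ((a + b) / 2) (q ^ 2) m *
        thetaTerm i.2 (ε / δ) ((a - b) / 2) (q ^ 2) n) := by
  set x : ℝ := m + (a + b) / 2 with hx
  set y : ℝ := n + (a - b) / 2 with hy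
  have hadd : ((m + n : ℤ) : ℝ) + a = x + y := by push_cast; ring
  have hsub : ((m - n : ℤ) : ℝ) + b = x - y := by push_cast; ring
  have hzpow : ε ^ (m + n) * δ ^ (m - n) = (ε * δ) ^ m * (ε / δ) ^ n := by
    rw [zpow_add₀ hε, zpow_sub₀ hδ, mul_zpow, div_zpow]
    ring
  have hrpow : q ^ ((x + y) ^ 2) * q ^ ((x - y) ^ 2) = (q ^ 2) ^ (x ^ 2) * (q ^ 2) ^ (y ^ 2) := by
    simp only [← Real.rpow_natCast_mul hq.le, ← Real.rpow_add hq]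
    push_cast
    ring_nf
  calc thetaTerm k ε a q (m + n) * thetaTerm 0 δ b q (m - n)
      = (x + y) ^ k * (ε ^ (m + n) * δ ^ (m - n)) *
          (q ^ ((x + y) ^ 2) * q ^ ((x - y) ^ 2)) := by
        rw [thetaTerm, thetaTerm, hadd, hsub]
        ring
    _ = _ := by
        rw [hzpow, hrpow, (Commute.all x y).add_pow', sum_mul, sum_mul]
        refine sum_congr rfl fun i _ ↦ ?_
        rw [nsmul_eq_mul, thetaTerm, thetaTerm, ← hx, ← hy]
        ring

theorem hasSum_thetaTerm_add_mul_thetaTerm_sub (k : ℕ) (a b : ℝ) (hε : ε ≠ 0) (hδ : δ ≠ 0)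
    (hq : 0 < q) (hq1 : q < 1) :
    HasSum (fun p : ℤ × ℤ ↦ thetaTerm k ε a q (p.1 + p.2) * thetaTerm 0 δ b q (p.1 - p.2))
      (∑ i ∈ antidiagonal k, k.choose i.1 * (thetaSeries i.1 (ε * δ) ((a + b) / 2) (q ^ 2) *
        thetaSeries i.2 (ε / δ) ((a - b) / 2) (q ^ 2))) := by
  simp only [thetaTerm_add_mul_thetaTerm_sub k a b hε hδ hq]
  exact hasSum_sum fun i _ ↦ (hasSum_thetaTerm_mul_thetaTerm _ _ _ _ (mul_ne_zero hε hδ)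
    (div_ne_zero hε hδ) (pow_pos hq 2) (pow_lt_one₀ hq.le hq1 two_ne_zero)).mul_left _

/-- A weighted form of Schröter's product formula. The two sums come from the pairs of summation
indices of equal and of opposite parity. -/
theorem thetaSeries_mul_thetaSeries_zero (k : ℕ) (a b : ℝ) (hε : ε ≠ 0) (hδ : δ ≠ 0) (hq : 0 < q)
    (hq1 : q < 1) :
    thetaSeries k ε a q * thetaSeries 0 δ b q =
      ∑ i ∈ antidiagonal k, k.choose i.1 * (thetaSeries i.1 (ε * δ) ((a + b) / 2) (q ^ 2) *
        thetaSeries i.2 (ε / δ) ((a - b) / 2) (q ^ 2)) +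
      δ⁻¹ * ∑ i ∈ antidiagonal k, k.choose i.1 *
        (thetaSeries i.1 (ε * δ) ((a + (b - 1)) / 2) (q ^ 2) *
          thetaSeries i.2 (ε / δ) ((a - (b - 1)) / 2) (q ^ 2)) := by
  refine (hasSum_thetaTerm_mul_thetaTerm k 0 a b hε hδ hq hq1).unique (hasSum_of_hasSum_add_sub
    (hasSum_thetaTerm_add_mul_thetaTerm_sub k a b hε hδ hq hq1) ?_)
  refine ((hasSum_thetaTerm_add_mul_thetaTerm_sub k a (b - 1) hε hδ hq hq1).mul_left δ⁻¹).congr_fun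
    fun p ↦ ?_
  have hshift := thetaTerm_add_one 0 (b - 1) q hδ (p.1 - p.2 - 1)
  rw [sub_add_cancel, sub_add_cancel] at hshift
  rw [hshift, mul_left_comm, inv_mul_cancel_left₀ hδ]

theorem abs_thetaSeries_zero_le (a : ℝ) (hε : ε ≠ 0) (hq : 0 < q) (hq1 : q < 1) :
    |thetaSeries 0 ε a q| ≤ thetaSeries 0 |ε| a q := by
  refine (norm_tsum_le_tsum_norm (summable_thetaTerm 0 a hε hq hq1).norm).trans_eq
    (tsum_congr fun n ↦ ?_)
  simp [thetaTerm, abs_of_nonneg (Real.rpow_nonneg hq.le _)]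

theorem thetaSeries_zero_pos (a : ℝ) (hε : 0 < ε) (hq : 0 < q) (hq1 : q < 1) :
    0 < thetaSeries 0 ε a q := by
  have hpos (n : ℤ) : 0 < thetaTerm 0 ε a q n := by
    rw [thetaTerm, pow_zero, one_mul]
    positivity
  exact (summable_thetaTerm 0 a hε.ne' hq hq1).tsum_pos (fun n ↦ (hpos n).le) 0 (hpos 0)

theorem tendsto_thetaSeries_div_rpow (k : ℕ) {a μ : ℝ} (hε : ε ≠ 0) {s : Finset ℤ}
    (hs : ∀ n ∈ s, ((n : ℝ) + a) ^ 2 = μ) (hs' : ∀ n ∉ s, μ < ((n : ℝ) + a) ^ 2) :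
    Tendsto (fun q ↦ thetaSeries k ε a q / q ^ μ) (𝓝[>] 0)
      (𝓝 (∑ n ∈ s, ((n : ℝ) + a) ^ k * ε ^ n)) :=
  tendsto_tsum_mul_rpow_div_rpow hs hs' one_half_pos
    (summable_thetaTerm k a hε one_half_pos one_half_lt_one)

theorem tendsto_thetaSeries_zero_zero (hε : ε ≠ 0) :
    Tendsto (thetaSeries 0 ε 0) (𝓝[>] 0) (𝓝 1) := by
  have hlim := tendsto_thetaSeries_div_rpow 0 (a := 0) (μ := 0) hε (s := {0}) (by simp)
    fun n hn ↦ by simpa [sq_pos_iff] using hn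
  simpa using hlim

theorem tendsto_thetaSeries_half_div_rpow (k : ℕ) (hε : ε ≠ 0) :
    Tendsto (fun q ↦ thetaSeries k ε (1 / 2) q / q ^ (1 / 4 : ℝ)) (𝓝[>] 0)
      (𝓝 ((1 / 2) ^ k + (-1 / 2) ^ k * ε⁻¹)) := by
  have hmin (n : ℤ) (hn : n ∉ ({0, -1} : Finset ℤ)) : (1 / 4 : ℝ) < ((n : ℝ) + 1 / 2) ^ 2 := by
    have hpos : 0 < n * (n + 1) := by
      simp only [mem_insert, mem_singleton, not_or] at hn
      rcases lt_or_gt_of_ne hn.1 with h | h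
      · exact mul_pos_of_neg_of_neg h (by omega)
      · positivity
    have : (0 : ℝ) < n * (n + 1) := mod_cast hpos
    linarith
  have hsum : ∑ n ∈ ({0, -1} : Finset ℤ), ((n : ℝ) + 1 / 2) ^ k * ε ^ n =
      (1 / 2) ^ k + (-1 / 2) ^ k * ε⁻¹ := by norm_num
  exact hsum ▸ tendsto_thetaSeries_div_rpow k hε (by norm_num) hmin

end thetaSeries

/-! ### The classical theta constants -/

/-- The derivative `θ₁'(0)` of `θ₁(z) = ∑ (-1)ⁿ q^((n + 1/2)²) sin ((2n + 1) z)`. -/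
noncomputable def theta1Deriv (q : ℝ) : ℝ :=
  2 * thetaSeries 1 (-1) (1 / 2) q

section

variable {q : ℝ}

theorem theta2_eq_thetaSeries (q : ℝ) : theta2 q = thetaSeries 0 1 (1 / 2) q := by
  have hneg := thetaSeries_neg 0 1 (1 / 2) q
  rw [pow_zero, one_mul, inv_one] at hneg
  rw [← hneg]
  simp [theta2, thetaSeries, thetaTerm, sub_eq_add_neg]

theorem theta3_eq_thetaSeries (q : ℝ) : theta3 q = thetaSeries 0 1 0 q := by
  simp [theta3, thetaSeries, thetaTerm]

theorem theta4_eq_thetaSeries (q : ℝ) : theta4 q = thetaSeries 0 (-1) 0 q := by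
  simp [theta4, thetaSeries, thetaTerm]

theorem theta1Deriv_eq_tsum (hq : 0 < q) (hq1 : q < 1) :
    theta1Deriv q =
      ∑' n : ℤ, 2 * (n : ℝ) * (-1 : ℝ) ^ n * q ^ (((n : ℝ) + 1 / 2) ^ 2) := by
  have hsum (k : ℕ) : Summable (thetaTerm k (-1) (1 / 2) q) :=
    summable_thetaTerm k _ (neg_ne_zero.2 one_ne_zero) hq hq1
  calc theta1Deriv q = 2 * thetaSeries 1 (-1) (1 / 2) q - thetaSeries 0 (-1) (1 / 2) q := by
        rw [thetaSeries_zero_neg_one_half, sub_zero, theta1Deriv]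
    _ = ∑' n, (2 * thetaTerm 1 (-1) (1 / 2) q n - thetaTerm 0 (-1) (1 / 2) q n) := by
        rw [((hsum 1).mul_left 2).tsum_sub (hsum 0), tsum_mul_left, thetaSeries, thetaSeries]
    _ = _ := tsum_congr fun n ↦ by rw [thetaTerm, thetaTerm]; ring

theorem theta2_pos (hq : 0 < q) (hq1 : q < 1) : 0 < theta2 q :=
  theta2_eq_thetaSeries q ▸ thetaSeries_zero_pos _ one_pos hq hq1

theorem theta3_pos (hq : 0 < q) (hq1 : q < 1) : 0 < theta3 q :=
  theta3_eq_thetaSeries q ▸ thetaSeries_zero_pos _ one_pos hq hq1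

theorem abs_theta4_le_theta3 (hq : 0 < q) (hq1 : q < 1) : |theta4 q| ≤ theta3 q := by
  simpa [theta3_eq_thetaSeries, theta4_eq_thetaSeries] using
    abs_thetaSeries_zero_le 0 (neg_ne_zero.2 one_ne_zero) hq hq1

theorem theta3_mul_theta4 (hq : 0 < q) (hq1 : q < 1) :
    theta3 q * theta4 q = theta4 (q ^ 2) ^ 2 := by
  simp only [theta3_eq_thetaSeries, theta4_eq_thetaSeries]
  rw [thetaSeries_mul_thetaSeries_zero 0 0 0 one_ne_zero (neg_ne_zero.2 one_ne_zero) hq hq1]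
  norm_num [thetaSeries_zero_neg_one_half]
  ring

theorem theta2_sq (hq : 0 < q) (hq1 : q < 1) :
    theta2 q ^ 2 = 2 * theta2 (q ^ 2) * theta3 (q ^ 2) := by
  simp only [theta2_eq_thetaSeries, theta3_eq_thetaSeries]
  rw [sq, thetaSeries_mul_thetaSeries_zero 0 _ _ one_ne_zero one_ne_zero hq hq1]
  norm_num
  ring

theorem theta1Deriv_mul_theta2 (hq : 0 < q) (hq1 : q < 1) :
    theta1Deriv q * theta2 q = 2 * theta1Deriv (q ^ 2) * theta4 (q ^ 2) := by
  simp only [theta1Deriv, theta2_eq_thetaSeries, theta4_eq_thetaSeries]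
  rw [mul_assoc, thetaSeries_mul_thetaSeries_zero 1 _ _ (neg_ne_zero.2 one_ne_zero) one_ne_zero
    hq hq1]
  norm_num [Nat.antidiagonal_succ, thetaSeries_zero_neg_one_half]
  ring

/-- The difference `θ₁'(0) / θ₂ - θ₃ θ₄`, whose vanishing is Jacobi's derivative formula
`θ₁'(0) = θ₂ θ₃ θ₄`. -/
noncomputable def thetaDefect (q : ℝ) : ℝ :=
  theta1Deriv q / theta2 q - theta3 q * theta4 q

theorem thetaDefect_eq_mul_thetaDefect_sq (hq : 0 < q) (hq1 : q < 1) :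
    thetaDefect q = theta4 (q ^ 2) / theta3 (q ^ 2) * thetaDefect (q ^ 2) := by
  have hq' : 0 < q ^ 2 := pow_pos hq 2
  have hq1' : q ^ 2 < 1 := pow_lt_one₀ hq.le hq1 two_ne_zero
  have h2 := (theta2_pos hq hq1).ne'
  have h2' := (theta2_pos hq' hq1').ne'
  have h3' := (theta3_pos hq' hq1').ne'
  have hquot : theta1Deriv q / theta2 q =
      theta4 (q ^ 2) / theta3 (q ^ 2) * (theta1Deriv (q ^ 2) / theta2 (q ^ 2)) := by
    rw [← mul_div_mul_right _ _ h2, ← sq, theta1Deriv_mul_theta2 hq hq1, theta2_sq hq hq1]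
    field_simp
  rw [thetaDefect, thetaDefect, hquot, theta3_mul_theta4 hq hq1]
  field_simp

theorem abs_thetaDefect_le (hq : 0 < q) (hq1 : q < 1) :
    |thetaDefect q| ≤ |thetaDefect (q ^ 2)| := by
  have hq' : 0 < q ^ 2 := pow_pos hq 2
  have hq1' : q ^ 2 < 1 := pow_lt_one₀ hq.le hq1 two_ne_zero
  have h3' := theta3_pos hq' hq1'
  rw [thetaDefect_eq_mul_thetaDefect_sq hq hq1, abs_mul, abs_div, abs_of_pos h3']
  exact mul_le_of_le_one_left (abs_nonneg _)
    ((div_le_one h3').2 (abs_theta4_le_theta3 hq' hq1'))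

theorem tendsto_theta1Deriv_div_theta2 :
    Tendsto (fun q ↦ theta1Deriv q / theta2 q) (𝓝[>] 0) (𝓝 1) := by
  have hderiv := tendsto_thetaSeries_half_div_rpow 1 (neg_ne_zero.2 (one_ne_zero (α := ℝ)))
  have htheta2 := tendsto_thetaSeries_half_div_rpow 0 (one_ne_zero (α := ℝ))
  have hlim := (hderiv.const_mul 2).div htheta2 (by norm_num)
  rw [show 2 * ((1 / 2) ^ 1 + (-1 / 2) ^ 1 * (-1)⁻¹) / ((1 / 2) ^ 0 + (-1 / 2) ^ 0 * 1⁻¹) =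
    (1 : ℝ) by norm_num] at hlim
  refine hlim.congr' ?_
  filter_upwards [self_mem_nhdsWithin] with q (hq : 0 < q)
  rw [Pi.div_apply, ← mul_div_assoc, div_div_div_cancel_right₀ (by positivity), theta1Deriv,
    theta2_eq_thetaSeries]

theorem tendsto_thetaDefect : Tendsto thetaDefect (𝓝[>] 0) (𝓝 0) := by
  have hlim := tendsto_theta1Deriv_div_theta2.sub
    ((tendsto_thetaSeries_zero_zero one_ne_zero).mul
      (tendsto_thetaSeries_zero_zero (neg_ne_zero.2 one_ne_zero)))
  rw [mul_one, sub_self] at hlim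
  exact hlim.congr fun q ↦ by rw [thetaDefect, theta3_eq_thetaSeries, theta4_eq_thetaSeries]

theorem thetaDefect_eq_zero (hq : 0 < q) (hq1 : q < 1) : thetaDefect q = 0 :=
  eq_zero_of_norm_le_norm_sq (fun _ ↦ abs_thetaDefect_le) tendsto_thetaDefect hq hq1

end

theorem stmt_3 (q : ℝ) (hq : 0 < q) (hq1 : q < 1) :
    theta2 q * theta3 q * theta4 q
      = ∑' n : ℤ, 2 * (n : ℝ) * (-1 : ℝ)^n * q ^ (((n : ℝ) + 1/2)^2) := by
  have hdefect : theta1Deriv q / theta2 q = theta3 q * theta4 q :=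
    sub_eq_zero.1 (thetaDefect_eq_zero hq hq1)
  calc theta2 q * theta3 q * theta4 q = theta1Deriv q := by
        rw [mul_assoc, ← hdefect, mul_div_cancel₀ _ (theta2_pos hq hq1).ne']
    _ = _ := theta1Deriv_eq_tsum hq hq1
end

section
/- For real s > 1, the double sum Σ_{(m₁,m₂)∈ℤ²} (-1)^{m₂} / ((m₁-1/2)² + m₂²)^s equals 2^{2s+1} L₋₈(s) L₈(s). -/
noncomputable def chiNeg8 (n : ℕ) : ℝ :=
  if n % 8 = 1 ∨ n % 8 = 3 then 1 else if n % 8 = 5 ∨ n % 8 = 7 then -1 else 0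

noncomputable def chi8 (n : ℕ) : ℝ :=
  if n % 8 = 1 ∨ n % 8 = 7 then 1 else if n % 8 = 3 ∨ n % 8 = 5 then -1 else 0

noncomputable def LNeg8 (s : ℝ) : ℝ := ∑' n : ℕ, chiNeg8 n / (n : ℝ) ^ s

noncomputable def L8 (s : ℝ) : ℝ := ∑' n : ℕ, chi8 n / (n : ℝ) ^ s

/-!
Multiplying numerator and denominator by `2 ^ (2 * s)` turns the summand into `χ₈(N) / N ^ s`, where
`N = (2 m₁ - 1) ^ 2 + (2 m₂) ^ 2` is the norm of a Gaussian integer with odd real and even imaginary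
part: indeed `N ≡ 1 [MOD 8]` or `N ≡ 5 [MOD 8]` according to the parity of `m₂`. Exchanging real and
imaginary parts, these points carry half of the sum of `χ₈(N z) / (N z) ^ s` over all of `ℤ[i]`.

By Jacobi's theorem the number of Gaussian integers of norm `n ≠ 0` is `4 ∑_{d ∣ n} χ₄(d)`, so for
every completely multiplicative `f` with absolutely convergent sum
`∑_{z ∈ ℤ[i]} f(N z) = 4 (∑ χ₄(n) f(n)) (∑ f(n))`. Take `f(n) = χ₈(n) / n ^ s` and `χ₄ χ₈ = χ₋₈`.
-/

theorem filter_not_dvd_divisors_prime_mul {p : ℕ} (hp : p.Prime) (m : ℕ) :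
    {d ∈ (p * m).divisors | ¬ p ∣ d} = {d ∈ m.divisors | ¬ p ∣ d} := by
  ext d
  simp only [Finset.mem_filter, Nat.mem_divisors, ne_eq, mul_eq_zero, hp.ne_zero, false_or,
    and_congr_left_iff]
  exact fun hpd _ ↦ ((hp.coprime_iff_not_dvd.2 hpd).symm).dvd_mul_left

open Finset in
theorem sum_divisors_prime_mul_eq_add {R : Type*} [CommRing R] {p m : ℕ} (hp : p.Prime)
    (hm : m ≠ 0) (f : ℕ →* R) :
    ∑ d ∈ (p * m).divisors, f d =
      f p * ∑ d ∈ m.divisors, f d + ∑ d ∈ m.divisors with ¬ p ∣ d, f d := by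
  have hinj : Function.Injective (p * ·) := mul_right_injective₀ hp.ne_zero
  have hdvd : {d ∈ (p * m).divisors | p ∣ d} = m.divisors.image (p * ·) := by
    ext d
    simp only [mem_filter, Nat.mem_divisors, mem_image]
    constructor
    · rintro ⟨⟨hd, -⟩, e, rfl⟩
      exact ⟨e, ⟨Nat.dvd_of_mul_dvd_mul_left hp.pos hd, hm⟩, rfl⟩
    · rintro ⟨e, ⟨he, -⟩, rfl⟩
      exact ⟨⟨mul_dvd_mul_left p he, mul_ne_zero hp.ne_zero hm⟩, dvd_mul_right p e⟩
  rw [← sum_filter_add_sum_filter_not _ (p ∣ ·), hdvd,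
    filter_not_dvd_divisors_prime_mul hp, sum_image hinj.injOn, mul_sum]
  simp only [map_mul]

theorem sum_divisors_prime_mul {R : Type*} [CommRing R] {p m : ℕ} (hp : p.Prime) (hm : m ≠ 0)
    (f : ℕ →* R) :
    ∑ d ∈ (p * m).divisors, f d = (1 + f p) * ∑ d ∈ m.divisors, f d -
      f p * if p ∣ m then ∑ d ∈ (m / p).divisors, f d else 0 := by
  rw [sum_divisors_prime_mul_eq_add hp hm]
  split_ifs with hpm
  · obtain ⟨k, rfl⟩ := hpm
    have hk : k ≠ 0 := right_ne_zero_of_mul hm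
    rw [filter_not_dvd_divisors_prime_mul hp, Nat.mul_div_cancel_left k hp.pos,
      sum_divisors_prime_mul_eq_add hp hk]
    ring
  · have hndvd : {d ∈ m.divisors | ¬ p ∣ d} = m.divisors :=
      Finset.filter_true_of_mem fun d hd hpd ↦ hpm (hpd.trans (Nat.dvd_of_mem_divisors hd))
    rw [hndvd]
    ring

/-- The norm `a ^ 2 + b ^ 2` of the Gaussian integer `a + b * I`, as a natural number. -/
def natNorm : GaussianInt →*₀ ℕ where
  toFun z := z.norm.natAbs
  map_zero' := by simp
  map_one' := by simp
  map_mul' z w := by rw [Zsqrtd.norm_mul, Int.natAbs_mul]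

theorem intCast_natNorm (z : GaussianInt) : (natNorm z : ℤ) = z.re ^ 2 + z.im ^ 2 := by
  rw [show natNorm z = z.norm.natAbs from rfl, GaussianInt.abs_natCast_norm, Zsqrtd.norm_def]
  ring

theorem natCast_natNorm (z : GaussianInt) : (natNorm z : GaussianInt) = z * star z := by
  rw [← Zsqrtd.norm_eq_mul_conj, ← GaussianInt.abs_natCast_norm, Int.cast_natCast]
  rfl

theorem natNorm_star (z : GaussianInt) : natNorm (star z) = natNorm z :=
  congrArg Int.natAbs (Zsqrtd.norm_conj z)

theorem natNorm_natCast (n : ℕ) : natNorm n = n * n := by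
  zify
  rw [intCast_natNorm, Zsqrtd.re_natCast, Zsqrtd.im_natCast]
  ring

theorem natNorm_eq_zero {z : GaussianInt} : natNorm z = 0 ↔ z = 0 :=
  Int.natAbs_eq_zero.trans GaussianInt.norm_eq_zero

theorem natNorm_eq_one {z : GaussianInt} : natNorm z = 1 ↔ IsUnit z :=
  Zsqrtd.norm_eq_one_iff

theorem prime_of_prime_natNorm {w : GaussianInt} (hw : (natNorm w).Prime) : Prime w := by
  refine irreducible_iff_prime.1 ⟨fun hu ↦ hw.ne_one (natNorm_eq_one.2 hu), fun a b hab ↦ ?_⟩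
  rw [hab, map_mul, Nat.prime_mul_iff] at hw
  rw [← natNorm_eq_one, ← natNorm_eq_one]
  tauto

theorem dvd_or_star_dvd_of_dvd_natNorm {w z : GaussianInt} (hw : Prime w)
    (h : w ∣ (natNorm z : GaussianInt)) : w ∣ z ∨ star w ∣ z := by
  rw [natCast_natNorm] at h
  refine (hw.dvd_or_dvd h).imp_right fun h ↦ ?_
  simpa only [starRingEnd_apply, star_star] using map_dvd (starRingEnd GaussianInt) h

theorem not_star_dvd_self {w : GaussianInt} (hw : (natNorm w).Prime) (hw2 : natNorm w ≠ 2) :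
    ¬ star w ∣ w := by
  intro h
  set p := natNorm w
  have hpp : Prime (p : ℤ) := Nat.prime_iff_prime_int.1 hw
  have hnorm : (p : ℤ) = w.re ^ 2 + w.im ^ 2 := intCast_natNorm w
  have htrace : star w ∣ ((2 * w.re : ℤ) : GaussianInt) := by
    rw [show ((2 * w.re : ℤ) : GaussianInt) = star w + w by ext <;> simp; ring]
    exact dvd_add dvd_rfl h
  have htrace_norm : (p : ℤ) ∣ 2 * w.re * (2 * w.re) := by
    obtain ⟨v, hv⟩ := htrace
    rw [← Zsqrtd.norm_intCast (d := -1), hv, Zsqrtd.norm_mul, Zsqrtd.norm_conj,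
      ← GaussianInt.abs_natCast_norm]
    exact dvd_mul_right _ _
  have hp2 : ¬ (p : ℤ) ∣ 2 := fun h2 ↦
    hw2 ((Nat.prime_dvd_prime_iff_eq hw Nat.prime_two).1 (by exact_mod_cast h2))
  have hre : (p : ℤ) ∣ w.re :=
    (hpp.dvd_or_dvd ((hpp.dvd_or_dvd htrace_norm).elim id id)).resolve_left hp2
  have him : (p : ℤ) ∣ w.im := by
    refine hpp.dvd_of_dvd_pow (n := 2) ((Int.dvd_add_right (dvd_pow hre two_ne_zero)).1 ?_)
    rw [← hnorm]
  have hsq : (p : ℤ) * p ∣ p := by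
    rw [← sq]
    nth_rw 2 [hnorm]
    exact dvd_add (pow_dvd_pow_of_dvd hre 2) (pow_dvd_pow_of_dvd him 2)
  exact hpp.not_isUnit (hpp.irreducible.squarefree _ hsq)

theorem finite_natNorm_preimage_singleton (n : ℕ) : (natNorm ⁻¹' {n}).Finite := by
  refine Set.Finite.of_injOn (f := fun z : GaussianInt ↦ (z.re, z.im))
    (t := Set.Icc (-n : ℤ) n ×ˢ Set.Icc (-n : ℤ) n) (fun z hz ↦ ?_)
    (fun z _ w _ h ↦ Zsqrtd.ext (congrArg Prod.fst h) (congrArg Prod.snd h))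
    ((Set.finite_Icc _ _).prod (Set.finite_Icc _ _))
  have hnorm := intCast_natNorm z
  rw [show natNorm z = n from hz] at hnorm
  simp only [Set.mem_prod, Set.mem_Icc]
  refine ⟨⟨?_, ?_⟩, ?_, ?_⟩ <;> nlinarith [sq_nonneg z.re, sq_nonneg z.im]

/-- The number `r₂(n)` of representations of `n` as an ordered sum of two integer squares, counted
as the Gaussian integers of norm `n`. -/
noncomputable def r₂ (n : ℕ) : ℕ := (natNorm ⁻¹' {n}).ncard

theorem ncard_natNorm_eq_natNorm_mul_and_dvd {w : GaussianInt} (hw : w ≠ 0) (m : ℕ) :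
    {z | natNorm z = natNorm w * m ∧ w ∣ z}.ncard = r₂ m := by
  rw [r₂, ← Set.ncard_image_of_injective (natNorm ⁻¹' {m}) (mul_right_injective₀ hw)]
  congr 1
  ext z
  simp only [Set.mem_ofPred_eq, Set.mem_image, Set.mem_preimage, Set.mem_singleton_iff]
  constructor
  · rintro ⟨hz, v, rfl⟩
    rw [map_mul] at hz
    exact ⟨v, mul_left_cancel₀ (natNorm_eq_zero.not.2 hw) hz, rfl⟩
  · rintro ⟨v, rfl, rfl⟩
    exact ⟨map_mul natNorm w v, dvd_mul_right w v⟩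

theorem ncard_natNorm_eq_mul_and_natCast_dvd {p : ℕ} (hp : p ≠ 0) (m : ℕ) :
    {z | natNorm z = p * m ∧ (p : GaussianInt) ∣ z}.ncard = if p ∣ m then r₂ (m / p) else 0 := by
  split_ifs with hpm
  · obtain ⟨k, rfl⟩ := hpm
    rw [Nat.mul_div_cancel_left k (Nat.pos_of_ne_zero hp), ← mul_assoc, ← natNorm_natCast,
      ncard_natNorm_eq_natNorm_mul_and_dvd (Nat.cast_ne_zero.2 hp)]
  · rw [Set.ncard_eq_zero ((finite_natNorm_preimage_singleton _).subset fun z hz ↦ hz.1),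
      Set.eq_empty_iff_forall_notMem]
    rintro _ ⟨hz, v, rfl⟩
    rw [map_mul, natNorm_natCast, mul_assoc] at hz
    exact hpm ⟨natNorm v, (mul_left_cancel₀ hp hz).symm⟩

section Splitting

variable {w : GaussianInt}

theorem setOf_dvd_union_setOf_star_dvd (hw : Prime w) (m : ℕ) :
    {z | natNorm z = natNorm w * m ∧ w ∣ z} ∪ {z | natNorm z = natNorm w * m ∧ star w ∣ z} =
      natNorm ⁻¹' {natNorm w * m} := by
  ext z
  simp only [Set.mem_union, Set.mem_ofPred_eq, ← and_or_left, Set.mem_preimage,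
    Set.mem_singleton_iff, and_iff_left_iff_imp]
  intro hz
  refine dvd_or_star_dvd_of_dvd_natNorm hw ?_
  rw [hz, Nat.cast_mul, natCast_natNorm, mul_assoc]
  exact dvd_mul_right _ _

theorem dvd_and_star_dvd_iff (hw : (natNorm w).Prime) (hw2 : natNorm w ≠ 2) {z : GaussianInt} :
    w ∣ z ∧ star w ∣ z ↔ (natNorm w : GaussianInt) ∣ z := by
  rw [natCast_natNorm]
  constructor
  · rintro ⟨⟨v, rfl⟩, h⟩
    have hstar : Prime (star w) := prime_of_prime_natNorm (by rwa [natNorm_star])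
    exact mul_dvd_mul_left w ((hstar.dvd_or_dvd h).resolve_left (not_star_dvd_self hw hw2))
  · exact fun h ↦ ⟨dvd_of_mul_right_dvd h, dvd_of_mul_left_dvd h⟩

theorem r₂_natNorm_mul_add (hw : (natNorm w).Prime) (hw2 : natNorm w ≠ 2) (m : ℕ) :
    r₂ (natNorm w * m) + (if natNorm w ∣ m then r₂ (m / natNorm w) else 0) = 2 * r₂ m := by
  have hw0 : w ≠ 0 := natNorm_eq_zero.not.1 hw.ne_zero
  have hfin := finite_natNorm_preimage_singleton (natNorm w * m)
  have hinter : {z | natNorm z = natNorm w * m ∧ w ∣ z} ∩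
      {z | natNorm z = natNorm w * m ∧ star w ∣ z} =
        {z | natNorm z = natNorm w * m ∧ (natNorm w : GaussianInt) ∣ z} := by
    ext z
    simp only [Set.mem_inter_iff, Set.mem_ofPred_eq, ← dvd_and_star_dvd_iff hw hw2]
    tauto
  have hstar : {z | natNorm z = natNorm w * m ∧ star w ∣ z}.ncard = r₂ m := by
    rw [← natNorm_star w, ncard_natNorm_eq_natNorm_mul_and_dvd (star_ne_zero.2 hw0)]
  have hcard := Set.ncard_union_add_ncard_inter {z | natNorm z = natNorm w * m ∧ w ∣ z}
    {z | natNorm z = natNorm w * m ∧ star w ∣ z} (hfin.subset fun z hz ↦ hz.1)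
    (hfin.subset fun z hz ↦ hz.1)
  rwa [setOf_dvd_union_setOf_star_dvd (prime_of_prime_natNorm hw), hinter,
    ncard_natNorm_eq_natNorm_mul_and_dvd hw0, hstar,
    ncard_natNorm_eq_mul_and_natCast_dvd hw.ne_zero, ← two_mul] at hcard

end Splitting

theorem r₂_prime_mul_of_mod_four_eq_one {p : ℕ} (hp : p.Prime) (hp1 : p % 4 = 1) (m : ℕ) :
    r₂ (p * m) + (if p ∣ m then r₂ (m / p) else 0) = 2 * r₂ m := by
  have := Fact.mk hp
  obtain ⟨a, b, hab⟩ := Nat.Prime.sq_add_sq (p := p) (by omega)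
  obtain rfl : natNorm ⟨a, b⟩ = p := by zify; rw [intCast_natNorm, ← hab]; push_cast; rfl
  exact r₂_natNorm_mul_add hp (by omega) m

theorem r₂_prime_mul_of_mod_four_eq_three {p : ℕ} (hp : p.Prime) (hp3 : p % 4 = 3) (m : ℕ) :
    r₂ (p * m) = if p ∣ m then r₂ (m / p) else 0 := by
  have := Fact.mk hp
  have hprime := GaussianInt.prime_of_nat_prime_of_mod_four_eq_three p hp3
  rw [← ncard_natNorm_eq_mul_and_natCast_dvd hp.ne_zero, r₂]
  congr 1
  ext z
  simp only [Set.mem_preimage, Set.mem_singleton_iff, Set.mem_ofPred_eq, iff_self_and]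
  intro hz
  have hdvd : (p : GaussianInt) ∣ (natNorm z : GaussianInt) := by
    rw [hz, Nat.cast_mul]
    exact dvd_mul_right _ _
  simpa using dvd_or_star_dvd_of_dvd_natNorm hprime hdvd

theorem r₂_two_mul (m : ℕ) : r₂ (2 * m) = r₂ m := by
  let w : GaussianInt := ⟨1, 1⟩
  have hw : natNorm w = 2 := rfl
  have hprime : Prime w := prime_of_prime_natNorm (hw ▸ Nat.prime_two)
  have hstar : w ∣ star w := ⟨⟨0, -1⟩, rfl⟩
  have hsub : {z | natNorm z = natNorm w * m ∧ star w ∣ z} ⊆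
      {z | natNorm z = natNorm w * m ∧ w ∣ z} :=
    fun z hz ↦ ⟨hz.1, hstar.trans hz.2⟩
  rw [← ncard_natNorm_eq_natNorm_mul_and_dvd hprime.ne_zero m, ← Set.union_eq_left.2 hsub,
    setOf_dvd_union_setOf_star_dvd hprime, hw, r₂]

theorem r₂_prime_mul {p : ℕ} (hp : p.Prime) (m : ℕ) :
    (r₂ (p * m) : ℤ) = (1 + ZMod.χ₄ p) * r₂ m -
      ZMod.χ₄ p * (if p ∣ m then r₂ (m / p) else 0 : ℕ) := by
  have hmod : p = 2 ∨ p % 4 = 1 ∨ p % 4 = 3 := by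
    have := hp.eq_two_or_odd
    omega
  rcases hmod with rfl | hp1 | hp3
  · rw [r₂_two_mul, show ZMod.χ₄ (2 : ℕ) = 0 from rfl]
    ring
  · have h := r₂_prime_mul_of_mod_four_eq_one hp hp1 m
    rw [ZMod.χ₄_nat_one_mod_four hp1]
    omega
  · rw [ZMod.χ₄_nat_three_mod_four hp3, r₂_prime_mul_of_mod_four_eq_three hp hp3]
    ring

theorem r₂_one : r₂ 1 = 4 := by
  have hunits : natNorm ⁻¹' {1} =
      (({⟨1, 0⟩, ⟨-1, 0⟩, ⟨0, 1⟩, ⟨0, -1⟩} : Finset GaussianInt) : Set GaussianInt) := by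
    ext z
    simp only [Set.mem_preimage, Set.mem_singleton_iff, Finset.coe_insert, Finset.coe_singleton,
      Set.mem_insert_iff, Zsqrtd.ext_iff]
    constructor
    · intro hz
      have hnorm := intCast_natNorm z
      rw [hz, Nat.cast_one] at hnorm
      obtain ⟨a, b⟩ := z
      dsimp only at hnorm ⊢
      obtain ⟨ha₁, ha₂⟩ : -1 ≤ a ∧ a ≤ 1 := abs_le.1 ((sq_le_one_iff_abs_le_one a).1 (by nlinarith))
      obtain ⟨hb₁, hb₂⟩ : -1 ≤ b ∧ b ≤ 1 := abs_le.1 ((sq_le_one_iff_abs_le_one b).1 (by nlinarith))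
      interval_cases a <;> interval_cases b <;> omega
    · rintro (⟨hre, him⟩ | ⟨hre, him⟩ | ⟨hre, him⟩ | ⟨hre, him⟩) <;>
        zify <;> rw [intCast_natNorm, hre, him] <;> rfl
  rw [r₂, hunits, Set.ncard_coe_finset]
  rfl

/-- **Jacobi's two-square theorem**. -/
theorem r₂_eq_four_mul_sum_divisors {n : ℕ} (hn : n ≠ 0) :
    (r₂ n : ℤ) = 4 * ∑ d ∈ n.divisors, ZMod.χ₄ d := by
  induction n using Nat.strong_induction_on with
  | _ n ih =>
  rcases eq_or_ne n 1 with rfl | hn1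
  · simp [r₂_one]
  obtain ⟨p, hp, m, rfl⟩ := Nat.exists_prime_and_dvd hn1
  have hm : m ≠ 0 := right_ne_zero_of_mul hn
  have hlt : m < p * m := lt_mul_of_one_lt_left (Nat.pos_of_ne_zero hm) hp.one_lt
  have hsum : ∑ d ∈ (p * m).divisors, ZMod.χ₄ d = (1 + ZMod.χ₄ p) * ∑ d ∈ m.divisors, ZMod.χ₄ d -
      ZMod.χ₄ p * if p ∣ m then ∑ d ∈ (m / p).divisors, ZMod.χ₄ d else 0 :=
    sum_divisors_prime_mul hp hm
      ((ZMod.χ₄ : ZMod 4 →* ℤ).comp (Nat.castRingHom (ZMod 4) : ℕ →* ZMod 4))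
  rw [r₂_prime_mul hp, hsum, ih m hlt hm]
  split_ifs with hpm
  · have hdiv : m / p ≠ 0 := (Nat.div_ne_zero_iff_of_dvd hpm).2 ⟨hm, hp.ne_zero⟩
    rw [ih (m / p) ((Nat.div_le_self m p).trans_lt hlt) hdiv]
    ring
  · rw [Nat.cast_zero]
    ring

section Fibers

variable {α β : Type*} {N : α → β}

theorem tsum_preimage_singleton_comp {R : Type*} [NormedRing R] (g : β → R) (b : β) :
    ∑' a : N ⁻¹' {b}, g (N a) = (N ⁻¹' {b}).ncard * g b := by
  rw [tsum_congr fun a : N ⁻¹' {b} ↦ congrArg g (show N a = b from a.2), tsum_const,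
    Nat.card_coe_set_eq, nsmul_eq_mul]

theorem summable_comp_of_summable_ncard_mul_norm {E : Type*} [NormedAddCommGroup E]
    [CompleteSpace E] (hN : ∀ b, (N ⁻¹' {b}).Finite) {g : β → E}
    (hg : Summable fun b ↦ (N ⁻¹' {b}).ncard * ‖g b‖) : Summable fun a ↦ g (N a) := by
  refine Summable.of_norm ((Equiv.sigmaFiberEquiv N).summable_iff.1 ?_)
  refine (summable_sigma_of_nonneg fun _ ↦ norm_nonneg _).2 ⟨fun b ↦ ?_, ?_⟩
  · have : Finite {a // N a = b} := (hN b).to_subtype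
    exact Summable.of_finite
  · exact hg.congr fun b ↦ (tsum_preimage_singleton_comp (fun b ↦ ‖g b‖) b).symm

end Fibers

section Summation

variable {𝕜 : Type*} [NormedField 𝕜] [CompleteSpace 𝕜]

theorem hasSum_sum_divisors_mul {a : ℕ → 𝕜} {f : ℕ →*₀ 𝕜} (haf : Summable fun n ↦ ‖a n * f n‖)
    (hf : Summable fun n ↦ ‖f n‖) :
    HasSum (fun n ↦ (∑ d ∈ n.divisors, a d) * f n) ((∑' n, a n * f n) * ∑' n, f n) := by
  have hfiber (n : ℕ) : ∑' d : (fun d : ℕ × ℕ ↦ d.1 * d.2) ⁻¹' {n}, a d.1.1 * f d.1.1 * f d.1.2 =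
      (∑ d ∈ n.divisors, a d) * f n := by
    have hterm (d : (fun d : ℕ × ℕ ↦ d.1 * d.2) ⁻¹' {n}) :
        a d.1.1 * f d.1.1 * f d.1.2 = a d.1.1 * f n := by
      rw [mul_assoc, ← map_mul, show d.1.1 * d.1.2 = n from d.2]
    rw [tsum_congr hterm, tsum_mul_right]
    rcases eq_or_ne n 0 with rfl | hn
    · simp only [map_zero, mul_zero]
    · have hset : (fun d : ℕ × ℕ ↦ d.1 * d.2) ⁻¹' {n} = n.divisorsAntidiagonal := by
        ext d
        simp [hn]
      rw [hset, Finset.tsum_subtype' n.divisorsAntidiagonal fun d ↦ a d.1,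
        Nat.sum_divisorsAntidiagonal fun d _ ↦ a d]
  have h := (summable_mul_of_summable_norm haf hf).hasSum.tsum_fiberwise fun d ↦ d.1 * d.2
  rw [← tsum_mul_tsum_of_summable_norm haf hf] at h
  simpa only [hfiber] using h

theorem hasSum_r₂_mul {f : ℕ →*₀ 𝕜} (hf : Summable fun n ↦ ‖f n‖) :
    HasSum (fun n ↦ r₂ n * f n) (4 * ((∑' n : ℕ, ((ZMod.χ₄ n : ℤ) : 𝕜) * f n) * ∑' n, f n)) := by
  have hχ₄ (n : ℕ) : ‖((ZMod.χ₄ n : ℤ) : 𝕜)‖ ≤ 1 := by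
    rw [ZMod.χ₄_nat_eq_if_mod_four]
    split_ifs <;> simp
  have hχ₄f : Summable fun n : ℕ ↦ ‖((ZMod.χ₄ n : ℤ) : 𝕜) * f n‖ :=
    hf.of_nonneg_of_le (fun _ ↦ norm_nonneg _) fun n ↦
      (norm_mul_le _ _).trans (mul_le_of_le_one_left (norm_nonneg _) (hχ₄ n))
  refine ((hasSum_sum_divisors_mul hχ₄f hf).mul_left 4).congr_fun fun n ↦ ?_
  rcases eq_or_ne n 0 with rfl | hn
  · simp only [map_zero, mul_zero]
  · rw [← Int.cast_natCast (r₂ n), r₂_eq_four_mul_sum_divisors hn]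
    push_cast
    ring

theorem summable_comp_natNorm {f : ℕ →*₀ 𝕜} (hf : Summable fun n ↦ ‖f n‖) :
    Summable fun z ↦ f (natNorm z) := by
  have hr₂ : Summable fun n ↦ r₂ n * ‖f n‖ :=
    (hasSum_r₂_mul (f := normHom.comp f) (by simpa using hf)).summable
  exact summable_comp_of_summable_ncard_mul_norm finite_natNorm_preimage_singleton hr₂

theorem hasSum_comp_natNorm {f : ℕ →*₀ 𝕜} (hf : Summable fun n ↦ ‖f n‖) :
    HasSum (fun z ↦ f (natNorm z))
      (4 * ((∑' n : ℕ, ((ZMod.χ₄ n : ℤ) : 𝕜) * f n) * ∑' n, f n)) := by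
  have hsum := (summable_comp_natNorm hf).hasSum
  have hfiber := hsum.tsum_fiberwise natNorm
  simp only [tsum_preimage_singleton_comp] at hfiber
  rwa [hfiber.unique (hasSum_r₂_mul hf)] at hsum

end Summation

/-- Exchange of real and imaginary parts. -/
def swapReIm : GaussianInt ≃ GaussianInt where
  toFun z := ⟨z.im, z.re⟩
  invFun z := ⟨z.im, z.re⟩
  left_inv _ := rfl
  right_inv _ := rfl

theorem natNorm_swapReIm (z : GaussianInt) : natNorm (swapReIm z) = natNorm z := by
  zify
  rw [intCast_natNorm, intCast_natNorm]
  exact add_comm _ _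

/-- The parametrisation of the Gaussian integers with odd real and even imaginary part. -/
def oddEven (m : ℤ × ℤ) : GaussianInt := ⟨2 * m.1 - 1, 2 * m.2⟩

theorem oddEven_injective : Function.Injective oddEven := by
  intro m n h
  simp only [oddEven, Zsqrtd.mk.injEq] at h
  ext <;> omega

theorem mem_range_oddEven {z : GaussianInt} : z ∈ Set.range oddEven ↔ Odd z.re ∧ Even z.im := by
  constructor
  · rintro ⟨m, rfl⟩
    exact ⟨⟨m.1 - 1, by simp only [oddEven]; ring⟩, even_two_mul m.2⟩
  · rintro ⟨⟨a, ha⟩, b, hb⟩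
    exact ⟨(a + 1, b), Zsqrtd.ext (by rw [ha, oddEven]; ring) (by rw [hb, oddEven]; ring)⟩

theorem odd_natNorm_iff {z : GaussianInt} :
    Odd (natNorm z) ↔ z ∈ Set.range oddEven ∧ swapReIm z ∉ Set.range oddEven ∨
      z ∉ Set.range oddEven ∧ swapReIm z ∈ Set.range oddEven := by
  rw [← Int.odd_coe_nat, intCast_natNorm, mem_range_oddEven, mem_range_oddEven]
  simp only [swapReIm, Equiv.coe_fn_mk, Int.odd_add, Int.odd_pow, ← Int.not_odd_iff_even]
  tauto

theorem hasSum_comp_natNorm_of_hasSum_comp_oddEven {E : Type*} [AddCommMonoid E]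
    [TopologicalSpace E] [ContinuousAdd E] {g : ℕ → E} (hg : ∀ n, ¬ Odd n → g n = 0) {x : E}
    (h : HasSum (fun m ↦ g (natNorm (oddEven m))) x) :
    HasSum (fun z ↦ g (natNorm z)) (2 • x) := by
  let G := (Set.range oddEven).indicator fun z ↦ g (natNorm z)
  have hrange : HasSum (fun z : Set.range oddEven ↦ g (natNorm z)) x :=
    (oddEven_injective.hasSum_range_iff (f := fun z ↦ g (natNorm z))).2 h
  have hG : HasSum G x := (hasSum_subtype_iff_indicator (f := fun z ↦ g (natNorm z))).1 hrange
  have hG_mem {z : GaussianInt} (hz : z ∈ Set.range oddEven) : G z = g (natNorm z) :=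
    Set.indicator_of_mem hz _
  have hG_notMem {z : GaussianInt} (hz : z ∉ Set.range oddEven) : G z = 0 :=
    Set.indicator_of_notMem hz _
  have hG_not_odd {z : GaussianInt} (hz : ¬ Odd (natNorm z)) : G z = 0 :=
    Set.indicator_apply_eq_zero.2 fun _ ↦ hg _ hz
  have hsplit (z : GaussianInt) : g (natNorm z) = G z + G (swapReIm z) := by
    by_cases hz : Odd (natNorm z)
    · rcases odd_natNorm_iff.1 hz with ⟨h₁, h₂⟩ | ⟨h₁, h₂⟩
      · rw [hG_mem h₁, hG_notMem h₂, add_zero]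
      · rw [hG_notMem h₁, hG_mem h₂, natNorm_swapReIm, zero_add]
    · rw [hG_not_odd hz, hG_not_odd (natNorm_swapReIm z ▸ hz), hg _ hz, add_zero]
  rw [two_nsmul]
  exact (hG.add (swapReIm.hasSum_iff.2 hG)).congr_fun hsplit

theorem chi8_eq_χ₈ (n : ℕ) : chi8 n = (ZMod.χ₈ n : ℤ) := by
  rw [ZMod.χ₈_nat_eq_if_mod_eight, chi8]
  split_ifs <;> first | omega | simp

theorem chiNeg8_eq_χ₈' (n : ℕ) : chiNeg8 n = (ZMod.χ₈' n : ℤ) := by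
  rw [ZMod.χ₈'_nat_eq_if_mod_eight, chiNeg8]
  split_ifs <;> first | omega | simp

theorem chi8_mul (m n : ℕ) : chi8 (m * n) = chi8 m * chi8 n := by
  simp only [chi8_eq_χ₈, Nat.cast_mul, map_mul, Int.cast_mul]

theorem chiNeg8_eq_χ₄_mul_chi8 (n : ℕ) : chiNeg8 n = (ZMod.χ₄ n : ℤ) * chi8 n := by
  rw [chiNeg8_eq_χ₈', chi8_eq_χ₈]
  exact_mod_cast ZMod.χ₈'_int_eq_χ₄_mul_χ₈ n

theorem chi8_of_not_odd {n : ℕ} (hn : ¬ Odd n) : chi8 n = 0 := by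
  rw [Nat.not_odd_iff] at hn
  rw [chi8, if_neg (by omega), if_neg (by omega)]

theorem abs_chi8_le_one (n : ℕ) : |chi8 n| ≤ 1 := by
  rw [chi8]
  split_ifs <;> simp

/-- The completely multiplicative function `n ↦ χ₈(n) / n ^ s`, the summand of `L₈(s)`. -/
noncomputable def chi8DivRpow (s : ℝ) : ℕ →*₀ ℝ where
  toFun n := chi8 n / (n : ℝ) ^ s
  map_zero' := by simp [chi8]
  map_one' := by simp [chi8]
  map_mul' m n := by
    rw [chi8_mul, Nat.cast_mul, Real.mul_rpow (Nat.cast_nonneg m) (Nat.cast_nonneg n),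
      mul_div_mul_comm]

theorem chi8DivRpow_apply (s : ℝ) (n : ℕ) : chi8DivRpow s n = chi8 n / (n : ℝ) ^ s :=
  rfl

theorem summable_norm_chi8DivRpow {s : ℝ} (hs : 1 < s) : Summable fun n ↦ ‖chi8DivRpow s n‖ := by
  refine (Real.summable_one_div_nat_rpow.2 hs).of_nonneg_of_le (fun _ ↦ norm_nonneg _) fun n ↦ ?_
  have hn : 0 ≤ (n : ℝ) ^ s := by positivity
  rw [chi8DivRpow_apply, norm_div, Real.norm_of_nonneg hn, Real.norm_eq_abs]
  exact div_le_div_of_nonneg_right (abs_chi8_le_one n) hn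

theorem tsum_χ₄_mul_chi8DivRpow (s : ℝ) :
    ∑' n : ℕ, ((ZMod.χ₄ n : ℤ) : ℝ) * chi8DivRpow s n = LNeg8 s :=
  tsum_congr fun n ↦ by rw [chi8DivRpow_apply, chiNeg8_eq_χ₄_mul_chi8, mul_div_assoc]

theorem chi8_natNorm_oddEven (m : ℤ × ℤ) : chi8 (natNorm (oddEven m)) = (-1) ^ m.2 := by
  have hnorm := intCast_natNorm (oddEven m)
  have hodd : 8 ∣ (oddEven m).re ^ 2 - 1 :=
    Int.eight_dvd_sq_sub_one_of_odd (mem_range_oddEven.1 ⟨m, rfl⟩).1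
  rcases Int.even_or_odd m.2 with hm | hm
  · obtain ⟨j, hj⟩ := hm
    have him : (oddEven m).im ^ 2 = 8 * (2 * j ^ 2) := by simp only [oddEven, hj]; ring
    rw [Even.neg_one_zpow ⟨j, hj⟩, chi8, if_pos (by omega)]
  · obtain ⟨j, hj⟩ := hm
    have him : (oddEven m).im ^ 2 = 8 * (2 * j ^ 2 + 2 * j) + 4 := by
      simp only [oddEven, hj]; ring
    rw [Odd.neg_one_zpow ⟨j, hj⟩, chi8, if_neg (by omega), if_pos (by omega)]

theorem neg_one_zpow_div_rpow_eq (s : ℝ) (m : ℤ × ℤ) :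
    (-1 : ℝ) ^ m.2 / (((m.1 : ℝ) - 1/2)^2 + (m.2 : ℝ)^2) ^ s =
      2 ^ (2 * s) * chi8DivRpow s (natNorm (oddEven m)) := by
  have hnorm : (natNorm (oddEven m) : ℝ) = 2 ^ (2 : ℝ) * ((m.1 - 1 / 2) ^ 2 + m.2 ^ 2) := by
    rw [← Int.cast_natCast, intCast_natNorm, oddEven, Real.rpow_two]
    push_cast
    ring
  rw [chi8DivRpow_apply, chi8_natNorm_oddEven, hnorm, Real.mul_rpow (by positivity) (by positivity),
    ← Real.rpow_mul (by norm_num), mul_div_assoc', mul_div_mul_left _ _ (by positivity)]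

theorem hasSum_chi8DivRpow_natNorm_oddEven {s : ℝ} (hs : 1 < s) :
    HasSum (fun m ↦ chi8DivRpow s (natNorm (oddEven m))) (2 * (LNeg8 s * L8 s)) := by
  have htotal := hasSum_comp_natNorm (summable_norm_chi8DivRpow hs)
  rw [tsum_χ₄_mul_chi8DivRpow, show ∑' n, chi8DivRpow s n = L8 s from rfl] at htotal
  have hhalf : Summable fun m ↦ chi8DivRpow s (natNorm (oddEven m)) :=
    htotal.summable.comp_injective oddEven_injective
  have hzero (n : ℕ) (hn : ¬ Odd n) : chi8DivRpow s n = 0 := by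
    rw [chi8DivRpow_apply, chi8_of_not_odd hn, zero_div]
  have htwice : 2 • ∑' m, chi8DivRpow s (natNorm (oddEven m)) = 4 * (LNeg8 s * L8 s) :=
    (hasSum_comp_natNorm_of_hasSum_comp_oddEven hzero hhalf.hasSum).unique htotal
  have hvalue : ∑' m, chi8DivRpow s (natNorm (oddEven m)) = 2 * (LNeg8 s * L8 s) := by
    rw [two_nsmul] at htwice
    linarith
  exact hvalue ▸ hhalf.hasSum

theorem stmt_5 (s : ℝ) (hs : 1 < s) :
    ∑' m : ℤ × ℤ,
        (-1 : ℝ) ^ m.2 / (((m.1 : ℝ) - 1/2)^2 + (m.2 : ℝ)^2) ^ s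
      = 2 ^ (2 * s + 1) * LNeg8 s * L8 s := by
  simp only [neg_one_zpow_div_rpow_eq]
  rw [((hasSum_chi8DivRpow_natNorm_oddEven hs).mul_left _).tsum_eq, Real.rpow_add_one two_ne_zero]
  ring
end
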